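/- Let f(t,x,v) be a C¹, strictly positive solution of the 1D BGK equation with τ > 0 such that for every (t,x) the function v ↦ f(t,x,v) is integrable with finite second moment, ρ_{f(t,x,·)} > 0 and T_{f(t,x,·)} > 0, the functions f log f, v f log f, (M[f]−f) log f and (M[f]−f) log M[f] are integrable in v, and differentiation under the integral sign in t and x is valid for ∫ f log f dv and ∫ v f log f dv. Then the H-theorem (entropy principle) holds: ∂_t ∫_ℝ f log f dv + ∂_x ∫_ℝ v f log f dv ≤ 0 at every (t,x). -/

import Mathlib

/-!
Write `M = M[f(t,x,·)]`. Pointwise in `v`, the BGK equation gives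
`∂_t (f log f) + v ∂_x (f log f) = τ⁻¹ (M - f)(log f + 1)`. Since `M` has the same mass and the
same second moment about `u_f` as `f`, and `log M` is a combination of `1` and `(v - u_f)²`, the
integrals of `M - f` and `(M - f) log M` vanish. Hence the right-hand side integrates to
`τ⁻¹ ∫ (M - f)(log f - log M) dv`, which is nonpositive because `log` is monotone.

The integrals of `∂_t (f log f)` and `v ∂_x (f log f)` are not assumed to converge separately.
Their sum is integrable, so either both converge and the argument above applies, or neither does;
in the latter case both Bochner integrals are `0` by convention and the inequality is trivial.
-/

open MeasureTheory Real

/-- The one-dimensional Maxwellian `M(v; ρ, u, T) = (ρ/√(2πRT)) exp(−(v−u)²/(2RT))`. -/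
noncomputable def maxwellian (R ρ u T v : ℝ) : ℝ :=
  ρ / Real.sqrt (2 * Real.pi * R * T) * Real.exp (-(v - u) ^ 2 / (2 * R * T))

/-- The density `ρ_f = ∫ f dv`. -/
noncomputable def momDensity (f : ℝ → ℝ) : ℝ := ∫ v : ℝ, f v

/-- The mean velocity `u_f = ρ_f⁻¹ ∫ v f dv`. -/
noncomputable def momVelocity (f : ℝ → ℝ) : ℝ := (momDensity f)⁻¹ * ∫ v : ℝ, v * f v

/-- The temperature `T_f`, defined by `ρ_f R T_f = ∫ (v − u_f)² f dv`. -/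
noncomputable def momTemperature (R : ℝ) (f : ℝ → ℝ) : ℝ :=
  (∫ v : ℝ, (v - momVelocity f) ^ 2 * f v) / (momDensity f * R)

/-- The local Maxwellian `M[f]` built from the moments of `f`. -/
noncomputable def maxwellianOf (R : ℝ) (f : ℝ → ℝ) : ℝ → ℝ :=
  fun v => maxwellian R (momDensity f) (momVelocity f) (momTemperature R f) v

/-- The Maxwellian is `ρ` times the Gaussian density with mean `u` and variance `R T`. -/
lemma maxwellian_eq_gaussianPDFReal (R ρ u T v : ℝ) (h : 0 ≤ R * T) :
    maxwellian R ρ u T v = ρ * ProbabilityTheory.gaussianPDFReal u (R * T).toNNReal v := by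
  simp only [maxwellian, ProbabilityTheory.gaussianPDFReal, Real.coe_toNNReal _ h]
  rw [← mul_assoc (2 * π), ← mul_assoc 2 R T]
  ring

lemma integrable_maxwellian (R ρ u T : ℝ) (h : 0 ≤ R * T) :
    Integrable (maxwellian R ρ u T) := by
  have : maxwellian R ρ u T = fun v => ρ * ProbabilityTheory.gaussianPDFReal u (R * T).toNNReal v :=
    funext fun v => maxwellian_eq_gaussianPDFReal R ρ u T v h
  rw [this]
  exact (ProbabilityTheory.integrable_gaussianPDFReal _ _).const_mul _

lemma integral_maxwellian (R ρ u T : ℝ) (h : 0 < R * T) :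
    ∫ v, maxwellian R ρ u T v = ρ := by
  simp_rw [maxwellian_eq_gaussianPDFReal R ρ u T _ h.le]
  rw [integral_const_mul, ProbabilityTheory.integral_gaussianPDFReal_eq_one, mul_one]
  exact (Real.toNNReal_pos.2 h).ne'

lemma integral_sq_mul_maxwellian (R ρ u T : ℝ) (h : 0 < R * T) :
    ∫ v, (v - u) ^ 2 * maxwellian R ρ u T v = ρ * (R * T) := by
  have hne : (R * T).toNNReal ≠ 0 := (Real.toNNReal_pos.2 h).ne'
  have hvar := ProbabilityTheory.variance_fun_id_gaussianReal (μ := u) (v := (R * T).toNNReal)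
  rw [ProbabilityTheory.variance_eq_integral (by fun_prop),
    ProbabilityTheory.integral_id_gaussianReal,
    ProbabilityTheory.integral_gaussianReal_eq_integral_smul hne] at hvar
  simp_rw [maxwellian_eq_gaussianPDFReal R ρ u T _ h.le]
  simp only [smul_eq_mul, Real.coe_toNNReal _ h.le] at hvar
  calc ∫ v, (v - u) ^ 2 * (ρ * ProbabilityTheory.gaussianPDFReal u (R * T).toNNReal v)
      = ∫ v, ρ * (ProbabilityTheory.gaussianPDFReal u (R * T).toNNReal v * (v - u) ^ 2) := by
        congr 1
        ext v
        ring
    _ = ρ * (R * T) := by rw [integral_const_mul, hvar]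

lemma maxwellian_pos {R ρ T : ℝ} (u v : ℝ) (hR : 0 < R) (hρ : 0 < ρ) (hT : 0 < T) :
    0 < maxwellian R ρ u T v := by
  unfold maxwellian
  positivity

lemma log_maxwellian {R ρ T : ℝ} (u v : ℝ) (hR : 0 < R) (hρ : 0 < ρ) (hT : 0 < T) :
    log (maxwellian R ρ u T v)
      = log (ρ / √(2 * π * R * T)) + -(1 / (2 * R * T)) * (v - u) ^ 2 := by
  unfold maxwellian
  rw [log_mul (by positivity) (by positivity), log_exp]
  ring

section Moments

variable {R : ℝ} {g : ℝ → ℝ}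

lemma integrable_maxwellianOf_sub (hR : 0 < R) (hT : 0 < momTemperature R g)
    (hg : Integrable g) : Integrable (fun v => maxwellianOf R g v - g v) :=
  (integrable_maxwellian R _ _ _ (by positivity)).sub hg

lemma integral_maxwellianOf_sub (hR : 0 < R) (hT : 0 < momTemperature R g)
    (hg : Integrable g) : ∫ v, (maxwellianOf R g v - g v) = 0 := by
  have hRT : 0 < R * momTemperature R g := by positivity
  have h := integral_maxwellian R (momDensity g) (momVelocity g) (momTemperature R g) hRT
  simp only [maxwellianOf]
  rw [integral_sub (integrable_maxwellian R _ _ _ hRT.le) hg, h]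
  simp [momDensity]

/-- `M[g]` and `g` have the same moments against `log M[g]`, a polynomial of degree two in `v`. -/
lemma integral_maxwellianOf_sub_mul_log (hR : 0 < R) (hρ : 0 < momDensity g)
    (hT : 0 < momTemperature R g) (hg : Integrable g) :
    ∫ v, (maxwellianOf R g v - g v) * log (maxwellianOf R g v) = 0 := by
  have hRT : 0 < R * momTemperature R g := by positivity
  have hM := integral_sq_mul_maxwellian R (momDensity g) (momVelocity g) (momTemperature R g) hRT
  have hG : ∫ v, (v - momVelocity g) ^ 2 * g v
      = momDensity g * (R * momTemperature R g) := by
    unfold momTemperature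
    field_simp
  -- A nonzero Bochner integral forces integrability of both second moments.
  have hMi := Integrable.of_integral_ne_zero (hM.trans_ne (by positivity))
  have hGi := Integrable.of_integral_ne_zero (hG.trans_ne (by positivity))
  have hsub := integrable_maxwellianOf_sub hR hT hg
  have hsub2 : Integrable (fun v => (v - momVelocity g) ^ 2 *
        maxwellian R (momDensity g) (momVelocity g) (momTemperature R g) v
      - (v - momVelocity g) ^ 2 * g v) := hMi.sub hGi
  have key : ∀ v, (maxwellianOf R g v - g v) * log (maxwellianOf R g v)
      = log (momDensity g / √(2 * π * R * momTemperature R g)) * (maxwellianOf R g v - g v)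
        + -(1 / (2 * R * momTemperature R g)) *
          ((v - momVelocity g) ^ 2 *
              maxwellian R (momDensity g) (momVelocity g) (momTemperature R g) v
            - (v - momVelocity g) ^ 2 * g v) := by
    intro v
    simp only [maxwellianOf]
    rw [log_maxwellian _ _ hR hρ hT]
    ring
  simp_rw [key]
  rw [integral_add (hsub.const_mul _) (hsub2.const_mul _), integral_const_mul,
    integral_const_mul, integral_maxwellianOf_sub hR hT hg, integral_sub hMi hGi, hM, hG]
  ring

/-- The entropy production of the BGK collision term is nonpositive. -/
lemma integral_maxwellianOf_sub_mul_log_le (hR : 0 < R) (hpos : ∀ v, 0 < g v)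
    (hρ : 0 < momDensity g) (hT : 0 < momTemperature R g) (hg : Integrable g)
    (hlogg : Integrable (fun v => (maxwellianOf R g v - g v) * log (g v)))
    (hlogM : Integrable (fun v => (maxwellianOf R g v - g v) * log (maxwellianOf R g v))) :
    ∫ v, (maxwellianOf R g v - g v) * log (g v) ≤ 0 := by
  rw [← integral_maxwellianOf_sub_mul_log hR hρ hT hg]
  refine integral_mono hlogg hlogM fun v => ?_
  have hM : 0 < maxwellianOf R g v := maxwellian_pos _ _ hR hρ hT
  rcases le_total (g v) (maxwellianOf R g v) with h | h
  · exact mul_le_mul_of_nonneg_left (log_le_log (hpos v) h) (sub_nonneg.2 h)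
  · exact mul_le_mul_of_nonpos_left (log_le_log hM h) (sub_nonpos.2 h)

end Moments

lemma deriv_mul_log {h : ℝ → ℝ} {s : ℝ} (hd : DifferentiableAt ℝ h s) (hs : 0 < h s) :
    deriv (fun y => h y * log (h y)) s = deriv h s * (log (h s) + 1) := by
  have := (hd.hasDerivAt.mul (hd.hasDerivAt.log hs.ne')).deriv
  refine this.trans ?_
  field_simp

/-- H-theorem (entropy principle) for a C¹, strictly positive solution of the 1D BGK
equation: `∂_t ∫ f log f dv + ∂_x ∫ v f log f dv ≤ 0` at every `(t,x)`. -/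
theorem bgk_H_theorem (R τ : ℝ) (hR : 0 < R) (hτ : 0 < τ)
    (f : ℝ → ℝ → ℝ → ℝ)
    (hC1 : ContDiff ℝ 1 (fun p : ℝ × ℝ × ℝ => f p.1 p.2.1 p.2.2))
    (hpos : ∀ t x v, 0 < f t x v)
    (hint : ∀ t x, Integrable (f t x))
    (hint2 : ∀ t x, Integrable (fun v => v ^ 2 * f t x v))
    (hρ : ∀ t x, 0 < momDensity (f t x))
    (hT : ∀ t x, 0 < momTemperature R (f t x))
    (hbgk : ∀ t x v,
      deriv (fun s => f s x v) t + v * deriv (fun y => f t y v) x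
        = (1 / τ) * (maxwellianOf R (f t x) v - f t x v))
    (hflogf : ∀ t x, Integrable (fun v => f t x v * Real.log (f t x v)))
    (hvflogf : ∀ t x, Integrable (fun v => v * (f t x v * Real.log (f t x v))))
    (hlogf : ∀ t x, Integrable
      (fun v => (maxwellianOf R (f t x) v - f t x v) * Real.log (f t x v)))
    (hlogM : ∀ t x, Integrable
      (fun v => (maxwellianOf R (f t x) v - f t x v) * Real.log (maxwellianOf R (f t x) v)))
    (hdiff_t : ∀ t x : ℝ,
      HasDerivAt (fun s => ∫ v : ℝ, f s x v * Real.log (f s x v))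
        (∫ v : ℝ, deriv (fun s => f s x v * Real.log (f s x v)) t) t)
    (hdiff_x : ∀ t x : ℝ,
      HasDerivAt (fun y => ∫ v : ℝ, v * (f t y v * Real.log (f t y v)))
        (∫ v : ℝ, deriv (fun y => v * (f t y v * Real.log (f t y v))) x) x) :
    ∀ t x : ℝ,
      deriv (fun s => ∫ v : ℝ, f s x v * Real.log (f s x v)) t
        + deriv (fun y => ∫ v : ℝ, v * (f t y v * Real.log (f t y v))) x ≤ 0 := by
  intro t x
  rw [(hdiff_t t x).deriv, (hdiff_x t x).deriv]
  have hdf : Differentiable ℝ (fun p : ℝ × ℝ × ℝ => f p.1 p.2.1 p.2.2) :=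
    hC1.differentiable one_ne_zero
  have hdt : ∀ v, DifferentiableAt ℝ (fun s => f s x v) t := fun v =>
    (hdf.comp (g := fun p : ℝ × ℝ × ℝ => f p.1 p.2.1 p.2.2)
      (f := fun s : ℝ => (s, x, v)) (by fun_prop)) t
  have hdx : ∀ v, DifferentiableAt ℝ (fun y => f t y v) x := fun v =>
    (hdf.comp (g := fun p : ℝ × ℝ × ℝ => f p.1 p.2.1 p.2.2)
      (f := fun y : ℝ => (t, y, v)) (by fun_prop)) x
  set A : ℝ → ℝ := fun v => deriv (fun s => f s x v * Real.log (f s x v)) t with hA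
  set B : ℝ → ℝ := fun v => deriv (fun y => v * (f t y v * Real.log (f t y v))) x with hB
  set D : ℝ → ℝ := fun v => maxwellianOf R (f t x) v - f t x v with hD
  have hAB : ∀ v, A v + B v = (1 / τ) * (D v * Real.log (f t x v) + D v) := by
    intro v
    have h1 : A v = deriv (fun s => f s x v) t * (log (f t x v) + 1) :=
      deriv_mul_log (hdt v) (hpos t x v)
    have h2 : B v = v * (deriv (fun y => f t y v) x * (log (f t x v) + 1)) := by
      simp only [hB, deriv_const_mul_field]
      rw [deriv_mul_log (hdx v) (hpos t x v)]
    rw [h1, h2]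
    linear_combination (log (f t x v) + 1) * hbgk t x v
  have hDi : Integrable D := integrable_maxwellianOf_sub hR (hT t x) (hint t x)
  have hsum : Integrable (fun v => A v + B v) := by
    simp_rw [hAB]
    exact ((hlogf t x).add hDi).const_mul _
  by_cases hAi : Integrable A
  · have hBi : Integrable B := (hsum.sub hAi).congr (.of_forall fun v => by simp)
    rw [← integral_add hAi hBi]
    simp_rw [hAB]
    rw [integral_const_mul, integral_add (hlogf t x) hDi,
      integral_maxwellianOf_sub hR (hT t x) (hint t x), add_zero]
    exact mul_nonpos_of_nonneg_of_nonpos (by positivity)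
      (integral_maxwellianOf_sub_mul_log_le hR (hpos t x) (hρ t x) (hT t x) (hint t x)
        (hlogf t x) (hlogM t x))
  · -- The sum is integrable, so `B` diverges together with `A` and both integrals are `0`.
    have hBi : ¬ Integrable B := fun hBi =>
      hAi ((hsum.sub hBi).congr (.of_forall fun v => by simp))
    rw [integral_undef hAi, integral_undef hBi, add_zero]
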